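/- Let p, p′ ∈ [0.1689, 0.5] with |p − p′| ≤ 5·10^{−13} (p′ is the node of the uniform grid with step h = 10^{−12} on [0.1689, 0.5] closest to p). Then for all integers n with 1 ≤ n ≤ 500000, |T_n(p) − T_n(p′)| ≤ 4.6·10^{−9}. -/

import Mathlib

/-- The standard normal distribution function Φ. -/
noncomputable def Phi (x : ℝ) : ℝ :=
  (Real.sqrt (2 * Real.pi))⁻¹ * ∫ t in Set.Iio x, Real.exp (-t ^ 2 / 2)

/-- The left-continuous binomial distribution function
`F_{n,p}(x) = Σ_{0 ≤ i < x} C(n,i) p^i q^{n−i}`. -/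
noncomputable def binomCDF (n : ℕ) (p x : ℝ) : ℝ :=
  ∑ i ∈ Finset.range (n + 1),
    if (i : ℝ) < x then (n.choose i : ℝ) * p ^ i * (1 - p) ^ (n - i) else 0

/-- `Δ_n(p) = sup_x |F_{n,p}(x) − Φ((x − np)/√(npq))|`. -/
noncomputable def Delta (n : ℕ) (p : ℝ) : ℝ :=
  ⨆ x : ℝ, |binomCDF n p x - Phi ((x - n * p) / Real.sqrt (n * p * (1 - p)))|

/-- `ρ(p) = (p² + q²)/√(pq)`. -/
noncomputable def rho (p : ℝ) : ℝ :=
  (p ^ 2 + (1 - p) ^ 2) / Real.sqrt (p * (1 - p))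

/-- `T_n(p) = √n · Δ_n(p) / ρ(p)`. -/
noncomputable def T (n : ℕ) (p : ℝ) : ℝ :=
  Real.sqrt n * Delta n p / rho p

open MeasureTheory Set

/-- The odd absolute moments `∫ |t|^(2j+1) e^{-a t²} = j! / a^(j+1)` of a Gaussian weight. -/
lemma integral_abs_pow_odd_mul_exp (j : ℕ) {a : ℝ} (ha : 0 < a) :
    ∫ t : ℝ, |t| ^ (2 * j + 1) * Real.exp (-a * t ^ 2) = j.factorial / a ^ (j + 1) := by
  have h1 := integral_comp_abs (f := fun t : ℝ => t ^ (2 * j + 1) * Real.exp (-a * t ^ 2))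
  simp only [sq_abs] at h1
  have h2 := integral_rpow_mul_exp_neg_mul_rpow (p := 2) (q := ((2 * j + 1 : ℕ) : ℝ)) (b := a)
    (by norm_num) (by linarith [Nat.cast_nonneg (α := ℝ) (2 * j + 1)]) ha
  have e : (((2 * j + 1 : ℕ) : ℝ) + 1) / 2 = ((j + 1 : ℕ) : ℝ) := by push_cast; ring
  simp only [neg_div, e, Real.rpow_neg ha.le, Real.rpow_natCast, Real.rpow_two] at h2
  rw [h1, h2]
  push_cast
  rw [Real.Gamma_nat_eq_factorial]
  field_simp

lemma integrable_abs_pow_mul_exp (j : ℕ) {a : ℝ} (ha : 0 < a) :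
    Integrable fun t : ℝ => |t| ^ j * Real.exp (-a * t ^ 2) := by
  have h := (integrable_rpow_mul_exp_neg_mul_sq ha (s := j)
    (by linarith [Nat.cast_nonneg (α := ℝ) j])).norm
  refine h.congr (Filter.Eventually.of_forall fun t => ?_)
  simp [Real.rpow_natCast]

lemma norm_exp_I_mul_sub_one_sub_le_of_nonneg {x : ℝ} (hx : 0 ≤ x) :
    ‖Complex.exp (Complex.I * x) - 1 - Complex.I * x‖ ≤ x ^ 2 / 2 := by
  have := image_norm_le_of_norm_deriv_right_le_deriv_boundary (a := 0) (b := x)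
    (f := fun t : ℝ => Complex.exp (Complex.I * t) - 1 - Complex.I * t)
    (f' := fun t : ℝ => Complex.I * (Complex.exp (Complex.I * t) - 1))
    (B := fun t => t ^ 2 / 2) (B' := fun t => t) (by fun_prop) ?_ (by simp) ?_ ?_
  · exact this ⟨hx, le_rfl⟩
  · intro t _
    have h : HasDerivAt (fun t : ℝ => (t : ℂ)) 1 t := Complex.ofRealCLM.hasDerivAt
    have h2 := (((h.const_mul Complex.I).cexp.sub_const 1).sub (h.const_mul Complex.I))
    refine (h2.congr_deriv ?_).hasDerivWithinAt
    ring
  · intro t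
    refine ((hasDerivAt_pow 2 t).div_const 2).congr_deriv ?_
    norm_num
  · intro t ht
    rw [norm_mul, Complex.norm_I, one_mul]
    refine Real.norm_exp_I_mul_ofReal_sub_one_le.trans ?_
    rw [Real.norm_of_nonneg ht.1]

lemma norm_exp_I_mul_sub_taylor_two_le_of_nonneg {x : ℝ} (hx : 0 ≤ x) :
    ‖Complex.exp (Complex.I * x) - 1 - Complex.I * x + (x : ℂ) ^ 2 / 2‖ ≤ x ^ 3 / 6 := by
  have := image_norm_le_of_norm_deriv_right_le_deriv_boundary (a := 0) (b := x)
    (f := fun t : ℝ => Complex.exp (Complex.I * t) - 1 - Complex.I * t + (t : ℂ) ^ 2 / 2)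
    (f' := fun t : ℝ => Complex.I * (Complex.exp (Complex.I * t) - 1 - Complex.I * t))
    (B := fun t => t ^ 3 / 6) (B' := fun t => t ^ 2 / 2) (by fun_prop) ?_ (by simp) ?_ ?_
  · exact this ⟨hx, le_rfl⟩
  · intro t _
    have h : HasDerivAt (fun t : ℝ => (t : ℂ)) 1 t := Complex.ofRealCLM.hasDerivAt
    have h2 := (((h.const_mul Complex.I).cexp.sub_const 1).sub (h.const_mul Complex.I)).add
      ((h.pow 2).div_const 2)
    refine (h2.congr_deriv ?_).hasDerivWithinAt
    push_cast
    linear_combination (t : ℂ) * Complex.I_sq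
  · intro t
    refine ((hasDerivAt_pow 3 t).div_const 6).congr_deriv ?_
    norm_num; ring
  · intro t ht
    rw [norm_mul, Complex.norm_I, one_mul]
    exact norm_exp_I_mul_sub_one_sub_le_of_nonneg ht.1

lemma norm_exp_I_mul_sub_taylor_two_le (x : ℝ) :
    ‖Complex.exp (Complex.I * x) - 1 - Complex.I * x + (x : ℂ) ^ 2 / 2‖ ≤ |x| ^ 3 / 6 := by
  rcases le_total 0 x with hx | hx
  · rw [abs_of_nonneg hx]; exact norm_exp_I_mul_sub_taylor_two_le_of_nonneg hx
  · have h := norm_exp_I_mul_sub_taylor_two_le_of_nonneg (x := -x) (by linarith)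
    rw [abs_of_nonpos hx, ← Complex.norm_conj]
    convert h using 2
    simp [← Complex.exp_conj, Complex.conj_ofNat]

lemma abs_exp_neg_sub_le {y : ℝ} (hy : 0 ≤ y) : |Real.exp (-y) - 1 + y| ≤ y ^ 2 / 2 := by
  rw [abs_le]
  constructor
  · nlinarith [Real.add_one_le_exp (-y)]
  · have h1 := Real.quadratic_le_exp_of_nonneg hy
    have h2 : Real.exp (-y) * Real.exp y = 1 := by rw [← Real.exp_add]; simp
    have h3 : Real.exp (-y) * (1 + y + y ^ 2 / 2) ≤ 1 := by
      refine le_trans ?_ h2.le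
      exact mul_le_mul_of_nonneg_left h1 (Real.exp_pos _).le
    by_contra! hc
    have h4 : 1 - y + y ^ 2 / 2 < Real.exp (-y) := by linarith
    have h5 : 0 < 1 + y + y ^ 2 / 2 := by positivity
    nlinarith [mul_lt_mul_of_pos_right h4 h5, pow_nonneg hy 4]

/-- The centred Bernoulli characteristic function. -/
noncomputable def bernoulliChar (p t : ℝ) : ℂ :=
  (1 - p) * Complex.exp (Complex.I * (-(p * t) : ℝ))
    + p * Complex.exp (Complex.I * ((1 - p) * t : ℝ))

lemma norm_bernoulliChar_sub_gaussian_le {p t : ℝ} (hp0 : 0 ≤ p) (hp1 : p ≤ 1)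
    (ht : |t| ≤ Real.pi) :
    ‖bernoulliChar p t - (Real.exp (-(p * (1 - p) * t ^ 2 / 2)) : ℝ)‖ ≤
      (p * (1 - p) * (p ^ 2 + (1 - p) ^ 2) / 6 + (p * (1 - p)) ^ 2 * Real.pi / 8) * |t| ^ 3 := by
  have h1 := norm_exp_I_mul_sub_taylor_two_le (-(p * t))
  have h2 := norm_exp_I_mul_sub_taylor_two_le ((1 - p) * t)
  have hq0 : 0 ≤ 1 - p := by linarith
  have hu : 0 ≤ p * (1 - p) := mul_nonneg hp0 hq0
  have h3 := abs_exp_neg_sub_le (y := p * (1 - p) * t ^ 2 / 2) (by positivity)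
  rw [abs_neg, abs_mul, abs_of_nonneg hp0] at h1
  rw [abs_mul, abs_of_nonneg hq0] at h2
  set A := Complex.exp (Complex.I * ((-(p * t) : ℝ) : ℂ)) with hA
  set B := Complex.exp (Complex.I * (((1 - p) * t : ℝ) : ℂ)) with hB
  set g := Real.exp (-(p * (1 - p) * t ^ 2 / 2)) with hg
  set a := A - 1 - Complex.I * ((-(p * t) : ℝ) : ℂ) + ((-(p * t) : ℝ) : ℂ) ^ 2 / 2 with ha
  set b := B - 1 - Complex.I * (((1 - p) * t : ℝ) : ℂ) + (((1 - p) * t : ℝ) : ℂ) ^ 2 / 2 with hb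
  have key : bernoulliChar p t - (g : ℝ) = ((1 - p : ℝ) : ℂ) * a + (p : ℂ) * b
      - ((g - 1 + p * (1 - p) * t ^ 2 / 2 : ℝ) : ℂ) := by
    rw [bernoulliChar, ← hA, ← hB, ha, hb]; push_cast; ring
  have n1 : ‖((1 - p : ℝ) : ℂ) * a‖ ≤ (1 - p) * ((p * |t|) ^ 3 / 6) := by
    rw [norm_mul, Complex.norm_real, Real.norm_of_nonneg hq0]
    exact mul_le_mul_of_nonneg_left h1 hq0
  have n2 : ‖(p : ℂ) * b‖ ≤ p * (((1 - p) * |t|) ^ 3 / 6) := by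
    rw [norm_mul, Complex.norm_real, Real.norm_of_nonneg hp0]
    exact mul_le_mul_of_nonneg_left h2 hp0
  have n3 : ‖((g - 1 + p * (1 - p) * t ^ 2 / 2 : ℝ) : ℂ)‖ ≤
      (p * (1 - p)) ^ 2 * (Real.pi * |t| ^ 3) / 8 := by
    rw [Complex.norm_real, Real.norm_eq_abs]
    refine h3.trans ?_
    have : (p * (1 - p) * t ^ 2 / 2) ^ 2 / 2 = (p * (1 - p)) ^ 2 * (|t| * |t| ^ 3) / 8 := by
      rw [← sq_abs t]; ring
    rw [this]
    gcongr
  rw [key]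
  refine (norm_sub_le _ _).trans ((add_le_add ((norm_add_le _ _).trans (add_le_add n1 n2)) n3).trans
    (le_of_eq ?_))
  ring

lemma norm_bernoulliChar_le {p t : ℝ} (hp0 : 0 ≤ p) (hp1 : p ≤ 1) (ht : |t| ≤ Real.pi) :
    ‖bernoulliChar p t‖ ≤ Real.exp (-(2 * (p * (1 - p)) / Real.pi ^ 2 * t ^ 2)) := by
  have hu : 0 ≤ p * (1 - p) := mul_nonneg hp0 (by linarith)
  have hsq : ‖bernoulliChar p t‖ ^ 2 = 1 - 2 * (p * (1 - p)) * (1 - Real.cos t) := by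
    have e : bernoulliChar p t = Complex.exp ((-(p * t) : ℝ) * Complex.I) *
        ((1 - p + p * Real.cos t : ℝ) + (p * Real.sin t : ℝ) * Complex.I) := by
      have e2 : Complex.exp (Complex.I * ((1 - p) * t : ℝ)) =
          Complex.exp ((-(p * t) : ℝ) * Complex.I) * Complex.exp (t * Complex.I) := by
        rw [← Complex.exp_add]; congr 1; push_cast; ring
      rw [bernoulliChar, e2, mul_comm Complex.I, Complex.exp_mul_I (t : ℂ)]
      push_cast; ring
    rw [e, norm_mul, Complex.norm_exp_ofReal_mul_I, one_mul, ← Complex.normSq_eq_norm_sq,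
      Complex.normSq_add_mul_I]
    linear_combination p ^ 2 * Real.sin_sq_add_cos_sq t
  have hcos := Real.cos_le_one_sub_mul_cos_sq ht
  have hexp := Real.add_one_le_exp (-(4 * (p * (1 - p)) / Real.pi ^ 2 * t ^ 2))
  refine abs_le_of_sq_le_sq' ?_ (Real.exp_pos _).le |>.2
  rw [hsq, ← Real.exp_nat_mul]
  have e3 : ((2 : ℕ) : ℝ) * -(2 * (p * (1 - p)) / Real.pi ^ 2 * t ^ 2) =
      -(4 * (p * (1 - p)) / Real.pi ^ 2 * t ^ 2) := by push_cast; ring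
  rw [e3]
  refine le_trans ?_ hexp
  have h5 : 2 * (p * (1 - p)) * (2 / Real.pi ^ 2 * t ^ 2) ≤
      2 * (p * (1 - p)) * (1 - Real.cos t) :=
    mul_le_mul_of_nonneg_left (by linarith) (by linarith)
  have e4 : 2 * (p * (1 - p)) * (2 / Real.pi ^ 2 * t ^ 2) =
    4 * (p * (1 - p)) / Real.pi ^ 2 * t ^ 2 := by ring
  linarith

lemma norm_pow_sub_pow_le_mul {z w : ℂ} {M : ℝ} (hz : ‖z‖ ≤ M) (hw : ‖w‖ ≤ M) (m : ℕ) :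
    ‖z ^ (m + 1) - w ^ (m + 1)‖ ≤ (m + 1) * M ^ m * ‖z - w‖ := by
  have hM : 0 ≤ M := (norm_nonneg z).trans hz
  rw [← Commute.geom_sum₂_mul (Commute.all z w), norm_mul]
  refine mul_le_mul_of_nonneg_right ?_ (norm_nonneg _)
  refine (norm_sum_le _ _).trans ((Finset.sum_le_card_nsmul _ _ (M ^ m) fun i hi => ?_).trans ?_)
  · rw [norm_mul, norm_pow, norm_pow]
    have hi' : i + (m + 1 - 1 - i) = m := by have := Finset.mem_range.1 hi; omega
    calc _ ≤ M ^ i * M ^ (m + 1 - 1 - i) := by gcongr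
      _ = M ^ m := by rw [← pow_add, hi']
  · simp

/-- The binomial probability of `k` successes in `m` trials. -/
noncomputable def binomMass (m k : ℕ) (p : ℝ) : ℝ := m.choose k * p ^ k * (1 - p) ^ (m - k)

lemma intervalIntegral_exp_int_mul (j : ℤ) :
    ∫ t : ℝ in (-Real.pi)..Real.pi, Complex.exp (Complex.I * j * t) =
      if j = 0 then ((2 * Real.pi : ℝ) : ℂ) else 0 := by
  split_ifs with h
  · subst h
    simp; ring
  · have hc : Complex.I * (j : ℂ) ≠ 0 := mul_ne_zero Complex.I_ne_zero (by exact_mod_cast h)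
    rw [integral_exp_mul_complex hc]
    have e : Complex.exp (Complex.I * j * (Real.pi : ℝ)) =
        Complex.exp (Complex.I * j * ((-Real.pi : ℝ) : ℂ)) := by
      rw [← mul_one (Complex.exp (Complex.I * j * ((-Real.pi : ℝ) : ℂ))),
        ← Complex.exp_int_mul_two_pi_mul_I j, ← Complex.exp_add]
      congr 1; push_cast; ring
    rw [e, sub_self, zero_div]

lemma bernoulliChar_pow_mul_exp (p t : ℝ) (m k : ℕ) :
    bernoulliChar p t ^ m * Complex.exp (Complex.I * ((m * p - k) * t : ℝ)) =
      ∑ j ∈ Finset.range (m + 1),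
        (binomMass m j p : ℂ) * Complex.exp (Complex.I * ((j : ℤ) - k : ℤ) * t) := by
  have e1 : bernoulliChar p t = Complex.exp (Complex.I * (-(p * t) : ℝ)) *
      (p * Complex.exp (Complex.I * t) + (1 - p)) := by
    have e2 : Complex.exp (Complex.I * ((1 - p) * t : ℝ)) =
        Complex.exp (Complex.I * (-(p * t) : ℝ)) * Complex.exp (Complex.I * t) := by
      rw [← Complex.exp_add]; congr 1; push_cast; ring
    rw [bernoulliChar, e2]; ring
  rw [e1, mul_pow, add_pow, ← Complex.exp_nat_mul, mul_right_comm, ← Complex.exp_add,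
    Finset.mul_sum]
  refine Finset.sum_congr rfl fun j _ => ?_
  rw [mul_pow, ← Complex.exp_nat_mul, binomMass]
  have e3 : Complex.exp (Complex.I * ((j : ℤ) - k : ℤ) * t) =
      Complex.exp (m * (Complex.I * (-(p * t) : ℝ)) + Complex.I * ((m * p - k) * t : ℝ)) *
        Complex.exp (j * (Complex.I * t)) := by
    rw [← Complex.exp_add]; congr 1; push_cast; ring
  rw [e3]; push_cast; ring

lemma continuous_bernoulliChar (p : ℝ) : Continuous (bernoulliChar p) := by
  unfold bernoulliChar; fun_prop

lemma integral_bernoulliChar_pow (p : ℝ) (m k : ℕ) :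
    ∫ t : ℝ in (-Real.pi)..Real.pi,
      bernoulliChar p t ^ m * Complex.exp (Complex.I * ((m * p - k) * t : ℝ)) =
      ((2 * Real.pi * binomMass m k p : ℝ) : ℂ) := by
  simp_rw [bernoulliChar_pow_mul_exp]
  rw [intervalIntegral.integral_finsetSum fun j _ =>
    (Continuous.intervalIntegrable (by fun_prop) _ _)]
  simp_rw [intervalIntegral.integral_const_mul, intervalIntegral_exp_int_mul]
  have : ∀ j : ℕ, ((j : ℤ) - k = 0) ↔ j = k := fun j => by omega
  simp only [this, mul_ite, mul_zero, Finset.sum_ite_eq', Finset.mem_range]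
  split_ifs with h
  · push_cast; ring
  · rw [binomMass, Nat.choose_eq_zero_of_lt (by omega)]; simp

lemma integral_gaussian_mul_exp {v : ℝ} (hv : 0 < v) (y : ℝ) :
    ∫ t : ℝ, (Real.exp (-(v * t ^ 2 / 2)) : ℂ) * Complex.exp (Complex.I * (y * t : ℝ)) =
      ((Real.sqrt (2 * Real.pi / v) * Real.exp (-y ^ 2 / (2 * v)) : ℝ) : ℂ) := by
  have h := fourierIntegral_gaussian (b := ((v / 2 : ℝ) : ℂ)) (by simpa using hv) (y : ℂ)
  have e1 : ((Real.pi : ℂ) / ((v / 2 : ℝ) : ℂ)) ^ (1 / 2 : ℂ) =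
      ((Real.sqrt (2 * Real.pi / v) : ℝ) : ℂ) := by
    rw [Real.sqrt_eq_rpow, Complex.ofReal_cpow (by positivity)]
    congr 1
    · push_cast; field_simp
    · push_cast; rfl
  rw [e1] at h
  rw [Complex.ofReal_mul, Complex.ofReal_exp]
  convert h using 1
  · congr 1; ext t
    rw [mul_comm, Complex.ofReal_exp]
    congr 2 <;> push_cast <;> ring
  · congr 2
    push_cast
    field_simp
    norm_num

lemma integrable_gaussian_mul_exp {v : ℝ} (hv : 0 < v) (y : ℝ) :
    Integrable fun t : ℝ =>
      (Real.exp (-(v * t ^ 2 / 2)) : ℂ) * Complex.exp (Complex.I * (y * t : ℝ)) := by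
  have h := integrable_abs_pow_mul_exp 0 (a := v / 2) (by positivity)
  refine h.mono' (Continuous.aestronglyMeasurable (by fun_prop))
    (Filter.Eventually.of_forall fun t => ?_)
  rw [norm_mul, Complex.norm_real, Real.norm_of_nonneg (Real.exp_pos _).le,
    mul_comm Complex.I, Complex.norm_exp_ofReal_mul_I, pow_zero, one_mul, mul_one]
  refine (congrArg Real.exp ?_).le
  ring

/-- The integrand bounding the difference of the binomial and Gaussian Fourier integrands. -/
noncomputable def lltBound (p : ℝ) (r : ℕ) (t : ℝ) : ℝ :=
  (r + 1) * (p * (1 - p) * (p ^ 2 + (1 - p) ^ 2) / 6 + (p * (1 - p)) ^ 2 * Real.pi / 8) *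
      (|t| ^ 3 * Real.exp (-(r * (2 * (p * (1 - p)) / Real.pi ^ 2)) * t ^ 2))
    + (1 + p * (1 - p) * Real.pi / 2) *
      (|t| ^ 1 * Real.exp (-((r + 1) * (p * (1 - p)) / 2) * t ^ 2))

lemma norm_fourier_integrand_sub_le {p x t : ℝ} (hp0 : 0 ≤ p) (hp1 : p ≤ 1) (r k : ℕ)
    (hx0 : (k : ℝ) ≤ x) (hx1 : x ≤ k + 1) (ht : |t| ≤ Real.pi) :
    ‖bernoulliChar p t ^ (r + 1) * Complex.exp (Complex.I * (((r + 1 : ℕ) * p - k) * t : ℝ)) -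
      (Real.exp (-((r + 2) * (p * (1 - p)) * t ^ 2 / 2)) : ℂ) *
        Complex.exp (Complex.I * (((r + 2) * p - x) * t : ℝ))‖ ≤ lltBound p r t := by
  have hu : 0 ≤ p * (1 - p) := mul_nonneg hp0 (by linarith)
  set g := Real.exp (-(p * (1 - p) * t ^ 2 / 2)) with hg
  have hg0 : 0 < g := Real.exp_pos _
  have hg1 : g ≤ 1 := Real.exp_le_one_iff.2 (by have := mul_nonneg hu (sq_nonneg t); linarith)
  have e1 : Real.exp (-((r + 2) * (p * (1 - p)) * t ^ 2 / 2)) = g ^ (r + 1) * g := by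
    rw [← pow_succ, hg, ← Real.exp_nat_mul]; congr 1; push_cast; ring
  have e2 : Complex.exp (Complex.I * (((r + 2) * p - x) * t : ℝ)) =
      Complex.exp (Complex.I * (((r + 1 : ℕ) * p - k) * t : ℝ)) *
        Complex.exp (Complex.I * ((p - (x - k)) * t : ℝ)) := by
    rw [← Complex.exp_add]; congr 1; push_cast; ring
  set E := Complex.exp (Complex.I * ((p - (x - k)) * t : ℝ)) with hE
  have hEn : ‖E - 1‖ ≤ |t| := by
    refine Real.norm_exp_I_mul_ofReal_sub_one_le.trans ?_
    rw [norm_mul, Real.norm_eq_abs, Real.norm_eq_abs]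
    refine mul_le_of_le_one_left (abs_nonneg _) (abs_le.2 ⟨by linarith, by linarith⟩)
  rw [e1, e2]
  have e3 : ∀ W : ℂ, bernoulliChar p t ^ (r + 1) * W - ((g ^ (r + 1) * g : ℝ) : ℂ) * (W * E) =
      W * ((bernoulliChar p t ^ (r + 1) - (g : ℂ) ^ (r + 1)) +
        ((g ^ (r + 1) : ℝ) : ℂ) * (((1 - g : ℝ) : ℂ) - (g : ℂ) * (E - 1))) := by
    intro W; push_cast; ring
  rw [e3, norm_mul, mul_comm Complex.I, Complex.norm_exp_ofReal_mul_I, one_mul, lltBound]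
  refine (norm_add_le _ _).trans (add_le_add ?_ ?_)
  · have hM := norm_bernoulliChar_le hp0 hp1 ht
    have hgM : ‖(g : ℂ)‖ ≤ Real.exp (-(2 * (p * (1 - p)) / Real.pi ^ 2 * t ^ 2)) := by
      rw [Complex.norm_real, Real.norm_of_nonneg hg0.le, hg]
      refine Real.exp_le_exp.2 (neg_le_neg ?_)
      have : 2 * (p * (1 - p)) / Real.pi ^ 2 ≤ p * (1 - p) / 2 := by
        rw [div_le_div_iff₀ (by positivity) (by norm_num)]
        nlinarith [Real.pi_gt_three, mul_nonneg hu (sub_nonneg.2 Real.two_le_pi)]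
      nlinarith [mul_le_mul_of_nonneg_right this (sq_nonneg t)]
    refine (norm_pow_sub_pow_le_mul hM hgM r).trans ?_
    refine (mul_le_mul_of_nonneg_left (norm_bernoulliChar_sub_gaussian_le hp0 hp1 ht)
      (by positivity)).trans (le_of_eq ?_)
    rw [← Real.exp_nat_mul]
    have : (r : ℝ) * -(2 * (p * (1 - p)) / Real.pi ^ 2 * t ^ 2) =
      -(r * (2 * (p * (1 - p)) / Real.pi ^ 2)) * t ^ 2 := by ring
    rw [this]; ring
  · have hgp : g ^ (r + 1) = Real.exp (-((r + 1) * (p * (1 - p)) / 2) * t ^ 2) := by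
      rw [hg, ← Real.exp_nat_mul]; congr 1; push_cast; ring
    have h1 : ‖((1 - g : ℝ) : ℂ) - (g : ℂ) * (E - 1)‖ ≤
        (1 + p * (1 - p) * Real.pi / 2) * |t| := by
      refine (norm_sub_le _ _).trans ?_
      rw [norm_mul, Complex.norm_real, Complex.norm_real, Real.norm_of_nonneg hg0.le,
        Real.norm_of_nonneg (by linarith)]
      have h2 : 1 - g ≤ p * (1 - p) * Real.pi / 2 * |t| := by
        have h3 := Real.add_one_le_exp (-(p * (1 - p) * t ^ 2 / 2))
        rw [← hg] at h3
        have h4 : p * (1 - p) * (|t| * |t|) ≤ p * (1 - p) * (Real.pi * |t|) := by gcongr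
        have h5 : |t| * |t| = t ^ 2 := by rw [← sq_abs]; ring
        rw [h5] at h4
        linarith
      nlinarith [mul_le_mul hg1 hEn (norm_nonneg _) zero_le_one]
    rw [norm_mul, Complex.norm_real, Real.norm_of_nonneg (by positivity), hgp, pow_one]
    refine (mul_le_mul_of_nonneg_left h1 (Real.exp_pos _).le).trans (le_of_eq ?_)
    ring

lemma norm_gaussian_integrand_le_of_pi_le {p y t : ℝ} (hp0 : 0 ≤ p) (hp1 : p ≤ 1) (r : ℕ)
    (ht : Real.pi ≤ |t|) :
    ‖(Real.exp (-((r + 2) * (p * (1 - p)) * t ^ 2 / 2)) : ℂ) *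
        Complex.exp (Complex.I * (y * t : ℝ))‖ ≤ lltBound p r t := by
  have hu : 0 ≤ p * (1 - p) := mul_nonneg hp0 (by linarith)
  rw [norm_mul, Complex.norm_real, Real.norm_of_nonneg (Real.exp_pos _).le,
    mul_comm Complex.I, Complex.norm_exp_ofReal_mul_I, mul_one, lltBound]
  have h1 : Real.exp (-((r + 2) * (p * (1 - p)) * t ^ 2 / 2)) ≤
      Real.exp (-((r + 1) * (p * (1 - p)) / 2) * t ^ 2) := by
    refine Real.exp_le_exp.2 ?_
    nlinarith [mul_nonneg hu (sq_nonneg t)]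
  have h2 : 1 ≤ (1 + p * (1 - p) * Real.pi / 2) * |t| ^ 1 := by
    have h3 : 0 ≤ p * (1 - p) * Real.pi / 2 := by positivity
    have h4 : 1 ≤ |t| := by linarith [Real.pi_gt_three]
    rw [pow_one]; nlinarith
  have h5 := (Real.exp_pos (-((r + 1) * (p * (1 - p)) / 2) * t ^ 2)).le
  have h6 : 0 ≤ (r + 1) * (p * (1 - p) * (p ^ 2 + (1 - p) ^ 2) / 6 +
      (p * (1 - p)) ^ 2 * Real.pi / 8) *
      (|t| ^ 3 * Real.exp (-(r * (2 * (p * (1 - p)) / Real.pi ^ 2)) * t ^ 2)) := by positivity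
  rw [← mul_assoc (1 + p * (1 - p) * Real.pi / 2)]
  nlinarith [mul_le_mul_of_nonneg_right h2 h5]

lemma integrable_lltBound {p : ℝ} (hp0 : 0 < p) (hp1 : p < 1) {r : ℕ} (hr : 0 < r) :
    Integrable (lltBound p r) := by
  have hu : 0 < p * (1 - p) := mul_pos hp0 (by linarith)
  have hr' : (0 : ℝ) < r := by exact_mod_cast hr
  exact ((integrable_abs_pow_mul_exp 3 (by positivity)).const_mul _).add
    ((integrable_abs_pow_mul_exp 1 (by positivity)).const_mul _)

lemma integral_lltBound {p : ℝ} (hp0 : 0 < p) (hp1 : p < 1) {r : ℕ} (hr : 0 < r) :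
    ∫ t, lltBound p r t =
      (r + 1) * (p * (1 - p) * (p ^ 2 + (1 - p) ^ 2) / 6 + (p * (1 - p)) ^ 2 * Real.pi / 8) /
          (r * (2 * (p * (1 - p)) / Real.pi ^ 2)) ^ 2
        + (1 + p * (1 - p) * Real.pi / 2) / ((r + 1) * (p * (1 - p)) / 2) := by
  have hu : 0 < p * (1 - p) := mul_pos hp0 (by linarith)
  have hr' : (0 : ℝ) < r := by exact_mod_cast hr
  unfold lltBound
  rw [integral_add ((integrable_abs_pow_mul_exp 3 (by positivity)).const_mul _)
    ((integrable_abs_pow_mul_exp 1 (by positivity)).const_mul _), integral_const_mul,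
    integral_const_mul]
  have h3 := integral_abs_pow_odd_mul_exp 1
    (a := r * (2 * (p * (1 - p)) / Real.pi ^ 2)) (by positivity)
  have h1 := integral_abs_pow_odd_mul_exp 0
    (a := (r + 1) * (p * (1 - p)) / 2) (by positivity)
  norm_num only [mul_one, mul_zero, zero_add, Nat.factorial, Nat.cast_one, pow_one] at h3 h1
  simp only [pow_one]
  rw [h3, h1]
  ring

/-- A local limit theorem with an explicit error bound. -/
lemma abs_binomMass_sub_gaussian_le {p x : ℝ} (hp0 : 0 < p) (hp1 : p < 1) {r : ℕ} (hr : 0 < r)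
    (k : ℕ) (hx0 : (k : ℝ) ≤ x) (hx1 : x ≤ k + 1) :
    |2 * Real.pi * binomMass (r + 1) k p -
      Real.sqrt (2 * Real.pi / ((r + 2) * (p * (1 - p)))) *
        Real.exp (-((r + 2) * p - x) ^ 2 / (2 * ((r + 2) * (p * (1 - p)))))| ≤
      ∫ t, lltBound p r t := by
  have hu : 0 < p * (1 - p) := mul_pos hp0 (by linarith)
  have hv : 0 < (r + 2) * (p * (1 - p)) := by positivity
  have hF := integral_bernoulliChar_pow p (r + 1) k
  have hG := integral_gaussian_mul_exp hv ((r + 2) * p - x)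
  rw [intervalIntegral.integral_of_le (by linarith [Real.pi_pos]),
    ← integral_indicator measurableSet_Ioc] at hF
  rw [← Real.norm_eq_abs, ← Complex.norm_real, Complex.ofReal_sub, ← hF, ← hG, ← integral_sub]
  · refine norm_integral_le_of_norm_le (integrable_lltBound hp0 hp1 hr)
      (Filter.Eventually.of_forall fun t => ?_)
    by_cases ht : t ∈ Ioc (-Real.pi) Real.pi
    · rw [indicator_of_mem ht]
      exact norm_fourier_integrand_sub_le hp0.le hp1.le r k hx0 hx1 (abs_le.2 ⟨ht.1.le, ht.2⟩)
    · rw [indicator_of_notMem ht, zero_sub, norm_neg]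
      refine norm_gaussian_integrand_le_of_pi_le hp0.le hp1.le r ?_
      by_contra! hc
      exact ht ⟨(abs_lt.1 hc).1, (abs_lt.1 hc).2.le⟩
  · refine (integrable_indicator_iff measurableSet_Ioc).2 ?_
    refine (Continuous.integrableOn_Icc ?_).mono_set Ioc_subset_Icc_self
    have := continuous_bernoulliChar p
    fun_prop
  · exact integrable_gaussian_mul_exp hv _

lemma mul_integral_lltBound_le {p : ℝ} (hp0 : 0 < p) (hp1 : p < 1) (hu : 0.14 ≤ p * (1 - p))
    {r : ℕ} (hr : 199 ≤ r) : (r + 2) * ∫ t, lltBound p r t ≤ 48.5 := by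
  rw [integral_lltBound hp0 hp1 (by omega)]
  have hpq : p ^ 2 + (1 - p) ^ 2 = 1 - 2 * (p * (1 - p)) := by ring
  rw [hpq]
  set u := p * (1 - p) with hu'
  have hu0 : 0 < u := by linarith
  have hr' : (199 : ℝ) ≤ r := by exact_mod_cast hr
  have hr0 : (0 : ℝ) < r := by linarith
  have hpi := Real.pi_lt_d4
  have hpi0 := Real.pi_pos
  have hinv : 1 / u ≤ 1 / 0.14 := one_div_le_one_div_of_le (by norm_num) hu
  have e : (r + 2) * ((r + 1) * (u * (1 - 2 * u) / 6 + u ^ 2 * Real.pi / 8) /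
        (r * (2 * u / Real.pi ^ 2)) ^ 2 + (1 + u * Real.pi / 2) / ((r + 1) * u / 2)) =
      ((r + 2) * (r + 1) / r ^ 2) * ((1 / u / 6 - 1 / 3 + Real.pi / 8) * (Real.pi ^ 4 / 4)) +
        ((r + 2) / (r + 1)) * (2 * (1 / u) + Real.pi) := by
    field_simp
    ring
  rw [e]
  have h1 : (r + 2) * (r + 1) / (r : ℝ) ^ 2 ≤ 1.0152 := by
    rw [div_le_iff₀ (by positivity)]; nlinarith
  have h2 : ((r : ℝ) + 2) / (r + 1) ≤ 1.005 := by
    rw [div_le_iff₀ (by positivity)]; linarith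
  have h3 : Real.pi ^ 4 ≤ 97.42 := by
    calc Real.pi ^ 4 ≤ 3.1416 ^ 4 := by gcongr
      _ ≤ 97.42 := by norm_num
  have h4 : 1 / u / 6 - 1 / 3 + Real.pi / 8 ≤ 1.25 := by
    norm_num at hinv ⊢; linarith
  have h5 : 2 * (1 / u) + Real.pi ≤ 17.43 := by
    norm_num at hinv ⊢; linarith
  have h6 : 0 ≤ 1 / u / 6 - 1 / 3 + Real.pi / 8 := by
    have : 0 < 1 / u := by positivity
    linarith [Real.pi_gt_three]
  calc _ ≤ (1.0152 : ℝ) * (1.25 * (97.42 / 4)) + 1.005 * 17.43 := by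
        gcongr
    _ ≤ 48.5 := by norm_num

/-- The standard normal density. -/
noncomputable def normalDensity (z : ℝ) : ℝ := (Real.sqrt (2 * Real.pi))⁻¹ * Real.exp (-z ^ 2 / 2)

lemma integrable_exp_neg_sq_div_two : Integrable fun t : ℝ => Real.exp (-t ^ 2 / 2) := by
  refine (integrable_exp_neg_mul_sq (b := 1 / 2) (by norm_num)).congr
    (Filter.Eventually.of_forall fun t => ?_)
  simp only; congr 1; ring

lemma hasDerivAt_Phi (z : ℝ) : HasDerivAt Phi (normalDensity z) z := by
  have hint := integrable_exp_neg_sq_div_two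
  have e : Phi = fun x => (Real.sqrt (2 * Real.pi))⁻¹ *
      ((∫ t in Iic (0 : ℝ), Real.exp (-t ^ 2 / 2)) + ∫ t in (0 : ℝ)..x, Real.exp (-t ^ 2 / 2)) := by
    ext x
    rw [Phi, ← integral_Iic_eq_integral_Iio, ← intervalIntegral.integral_Iic_sub_Iic
      hint.integrableOn hint.integrableOn]
    ring
  rw [e, normalDensity]
  have hc : Continuous fun t : ℝ => Real.exp (-t ^ 2 / 2) := by fun_prop
  exact ((hc.integral_hasStrictDerivAt 0 z).hasDerivAt.const_add _).const_mul _

lemma Phi_nonneg (z : ℝ) : 0 ≤ Phi z :=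
  mul_nonneg (by positivity) (integral_nonneg fun _ => (Real.exp_pos _).le)

lemma Phi_le_one (z : ℝ) : Phi z ≤ 1 := by
  have h1 : ∫ t in Iio z, Real.exp (-t ^ 2 / 2) ≤ ∫ t : ℝ, Real.exp (-t ^ 2 / 2) :=
    setIntegral_le_integral integrable_exp_neg_sq_div_two
      (Filter.Eventually.of_forall fun _ => (Real.exp_pos _).le)
  have h2 : ∫ t : ℝ, Real.exp (-t ^ 2 / 2) = Real.sqrt (2 * Real.pi) := by
    have h := integral_gaussian (1 / 2)
    rw [show Real.pi / (1 / 2) = 2 * Real.pi by ring] at h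
    rw [← h]; congr 1; ext t; congr 1; ring
  have h3 : 0 < Real.sqrt (2 * Real.pi) := by positivity
  rw [Phi, inv_mul_le_iff₀ h3, mul_one, ← h2]
  exact h1

lemma inv_sqrt_two_pi_le : (Real.sqrt (2 * Real.pi))⁻¹ ≤ 0.4 := by
  have : 2.5 ≤ Real.sqrt (2 * Real.pi) := Real.le_sqrt_of_sq_le (by linarith [Real.pi_gt_d2])
  calc _ ≤ (2.5 : ℝ)⁻¹ := by gcongr
    _ = 0.4 := by norm_num

lemma normalDensity_nonneg (z : ℝ) : 0 ≤ normalDensity z := by unfold normalDensity; positivity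

lemma normalDensity_le (z : ℝ) : normalDensity z ≤ 0.4 := by
  have h : Real.exp (-z ^ 2 / 2) ≤ 1 := Real.exp_le_one_iff.2 (by nlinarith [sq_nonneg z])
  calc _ ≤ (0.4 : ℝ) * 1 := by
        unfold normalDensity; gcongr; exact inv_sqrt_two_pi_le
    _ = 0.4 := by norm_num

lemma abs_mul_normalDensity_le (z : ℝ) : |z| * normalDensity z ≤ 0.4 := by
  have h : |z| * Real.exp (-z ^ 2 / 2) ≤ 1 := by
    have h1 := Real.add_one_le_exp (z ^ 2 / 2)
    have h2 : |z| ≤ Real.exp (z ^ 2 / 2) := by nlinarith [sq_nonneg (|z| - 1), sq_abs z]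
    rw [neg_div, Real.exp_neg, ← div_eq_mul_inv]
    exact (div_le_one (Real.exp_pos _)).2 h2
  calc _ = (Real.sqrt (2 * Real.pi))⁻¹ * (|z| * Real.exp (-z ^ 2 / 2)) := by
        unfold normalDensity; ring
    _ ≤ (0.4 : ℝ) * 1 := by gcongr; exact inv_sqrt_two_pi_le
    _ = 0.4 := by norm_num

lemma hasDerivAt_Phi_standardized {n : ℕ} (hn : 1 ≤ n) {p : ℝ} (hp0 : 0 < p) (hp1 : p < 1)
    (x : ℝ) :
    HasDerivAt (fun p : ℝ => Phi ((x - n * p) / Real.sqrt (n * p * (1 - p))))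
      (-(normalDensity ((x - n * p) / Real.sqrt (n * p * (1 - p))) *
        (n / Real.sqrt (n * p * (1 - p)) +
          (x - n * p) / Real.sqrt (n * p * (1 - p)) * ((1 - 2 * p) / (2 * (p * (1 - p))))))) p := by
  have hn' : (0 : ℝ) < n := by exact_mod_cast hn
  have hq : 0 < 1 - p := by linarith
  have hv : 0 < n * p * (1 - p) := by positivity
  have hs : 0 < Real.sqrt (n * p * (1 - p)) := Real.sqrt_pos.2 hv
  have d1 : HasDerivAt (fun p : ℝ => (n : ℝ) * p * (1 - p)) (n * (1 - 2 * p)) p := by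
    refine (((hasDerivAt_id p).const_mul (n : ℝ)).mul ((hasDerivAt_id p).const_sub 1)).congr_deriv ?_
    simp; ring
  have d2 := d1.sqrt hv.ne'
  have d3 : HasDerivAt (fun p : ℝ => x - n * p) (-n) p := by
    simpa using ((hasDerivAt_id p).const_mul (n : ℝ)).const_sub x
  refine ((hasDerivAt_Phi _).comp p (d3.div d2 hs.ne')).congr_deriv ?_
  rw [← mul_neg]
  congr 1
  have hsq : Real.sqrt (n * p * (1 - p)) ^ 2 = n * p * (1 - p) := Real.sq_sqrt hv.le
  set s := Real.sqrt (n * p * (1 - p))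
  have e : (1 - 2 * p) / (2 * (p * (1 - p))) = n * (1 - 2 * p) / (2 * s ^ 2) := by
    rw [hsq]; field_simp
  rw [e]
  field_simp
  ring

lemma binomMass_eq_eval (m k : ℕ) (p : ℝ) : binomMass m k p = (bernsteinPolynomial ℝ m k).eval p := by
  simp [binomMass, bernsteinPolynomial]

lemma derivative_sum_bernsteinPolynomial (m k : ℕ) :
    Polynomial.derivative (∑ i ∈ Finset.range (k + 1), bernsteinPolynomial ℝ (m + 1) i) =
      -((m + 1 : ℕ) : Polynomial ℝ) * bernsteinPolynomial ℝ m k := by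
  induction k with
  | zero => simpa using bernsteinPolynomial.derivative_zero ℝ (m + 1)
  | succ k ih =>
    rw [Finset.sum_range_succ, Polynomial.derivative_add, ih, bernsteinPolynomial.derivative_succ,
      Nat.add_sub_cancel]
    ring

lemma binomCDF_of_nonpos (n : ℕ) (p : ℝ) {x : ℝ} (hx : x ≤ 0) : binomCDF n p x = 0 :=
  Finset.sum_eq_zero fun i _ => if_neg (by have := Nat.cast_nonneg (α := ℝ) i; linarith)

lemma binomCDF_eq_sum (n k : ℕ) (p : ℝ) {x : ℝ} (hx0 : (k : ℝ) < x) (hx1 : x ≤ k + 1) :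
    binomCDF n p x = ∑ i ∈ Finset.range (k + 1), binomMass n i p := by
  have hi : ∀ i : ℕ, (i : ℝ) < x ↔ i ∈ Finset.range (k + 1) := fun i => by
    rw [Finset.mem_range]
    constructor
    · intro h; exact_mod_cast h.trans_le hx1
    · intro h
      have : (i : ℝ) ≤ k := by exact_mod_cast Nat.lt_succ_iff.1 h
      linarith
  simp_rw [binomCDF, hi]
  rw [← Finset.sum_filter, Finset.filter_mem_eq_inter]
  refine Finset.sum_subset Finset.inter_subset_right fun i h1 h2 => ?_
  have : n < i := by
    by_contra! hc
    exact h2 (Finset.mem_inter.2 ⟨Finset.mem_range.2 (by omega), h1⟩)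
  simp [Nat.choose_eq_zero_of_lt this]

lemma hasDerivAt_binomCDF (m k : ℕ) (p : ℝ) {x : ℝ} (hx0 : (k : ℝ) < x) (hx1 : x ≤ k + 1) :
    HasDerivAt (fun p => binomCDF (m + 1) p x) (-((m + 1) * binomMass m k p)) p := by
  simp_rw [binomCDF_eq_sum (m + 1) k _ hx0 hx1, binomMass_eq_eval, ← Polynomial.eval_finsetSum]
  refine (Polynomial.hasDerivAt _ p).congr_deriv ?_
  rw [derivative_sum_bernsteinPolynomial]
  simp; ring

lemma sum_binomMass (n : ℕ) (p : ℝ) : ∑ i ∈ Finset.range (n + 1), binomMass n i p = 1 := by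
  simp_rw [binomMass_eq_eval, ← Polynomial.eval_finsetSum, bernsteinPolynomial.sum,
    Polynomial.eval_one]

lemma binomMass_nonneg (n i : ℕ) {p : ℝ} (hp0 : 0 ≤ p) (hp1 : p ≤ 1) : 0 ≤ binomMass n i p := by
  have : 0 ≤ 1 - p := by linarith
  unfold binomMass; positivity

lemma binomMass_le_one (n i : ℕ) {p : ℝ} (hp0 : 0 ≤ p) (hp1 : p ≤ 1) : binomMass n i p ≤ 1 := by
  by_cases h : i ∈ Finset.range (n + 1)
  · rw [← sum_binomMass n p]
    exact Finset.single_le_sum (fun j _ => binomMass_nonneg n j hp0 hp1) h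
  · rw [binomMass, Nat.choose_eq_zero_of_lt (by simpa using h)]; simp

lemma binomCDF_nonneg (n : ℕ) {p : ℝ} (hp0 : 0 ≤ p) (hp1 : p ≤ 1) (x : ℝ) : 0 ≤ binomCDF n p x := by
  refine Finset.sum_nonneg fun i _ => ?_
  split_ifs
  exacts [binomMass_nonneg n i hp0 hp1, le_rfl]

lemma binomCDF_le_one (n : ℕ) {p : ℝ} (hp0 : 0 ≤ p) (hp1 : p ≤ 1) (x : ℝ) : binomCDF n p x ≤ 1 := by
  rw [← sum_binomMass n p]
  refine Finset.sum_le_sum fun i _ => ?_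
  split_ifs
  exacts [le_rfl, binomMass_nonneg n i hp0 hp1]

/-- A Lipschitz constant in `p`, uniform in `x`, for the normal approximation error. -/
noncomputable def errorLipschitz (n : ℕ) : ℝ := if n ≤ 200 then 2.1 * n + 1 else 8.7

lemma mul_binomMass_sub_density_le {p x : ℝ} (hp0 : 0 < p) (hp1 : p < 1)
    (hu : 0.14 ≤ p * (1 - p)) {n : ℕ} (hn : 200 < n) (k : ℕ) (hx0 : (k : ℝ) ≤ x)
    (hx1 : x ≤ k + 1) :
    |n * binomMass (n - 1) k p - normalDensity ((x - n * p) / Real.sqrt (n * p * (1 - p))) *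
      (n / Real.sqrt (n * p * (1 - p)))| ≤ 7.73 := by
  obtain ⟨r, rfl⟩ : ∃ r, n = r + 2 := ⟨n - 2, by omega⟩
  have hq : 0 < 1 - p := by linarith
  have h1 := abs_binomMass_sub_gaussian_le hp0 hp1 (r := r) (by omega) k hx0 hx1
  have h2 := mul_integral_lltBound_le hp0 hp1 hu (r := r) (by omega)
  have hv : 0 < ((r : ℝ) + 2) * p * (1 - p) := by positivity
  have e : ((r : ℝ) + 2) * (p * (1 - p)) = (r + 2) * p * (1 - p) := by ring
  push_cast
  have e1 : normalDensity ((x - (r + 2) * p) / Real.sqrt ((r + 2) * p * (1 - p))) *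
      ((r + 2) / Real.sqrt ((r + 2) * p * (1 - p))) = (r + 2) / (2 * Real.pi) *
      (Real.sqrt (2 * Real.pi / ((r + 2) * (p * (1 - p)))) *
        Real.exp (-((r + 2) * p - x) ^ 2 / (2 * ((r + 2) * (p * (1 - p)))))) := by
    rw [normalDensity, e, Real.sqrt_div (by positivity), div_pow, Real.sq_sqrt hv.le]
    have e2 : -((x - (r + 2) * p) ^ 2 / ((r + 2) * p * (1 - p))) / 2 =
        -((r + 2) * p - x) ^ 2 / (2 * ((r + 2) * p * (1 - p))) := by
      field_simp; ring
    rw [e2]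
    have hs : Real.sqrt (2 * Real.pi) ^ 2 = 2 * Real.pi := Real.sq_sqrt (by positivity)
    have hs0 : 0 < Real.sqrt (2 * Real.pi) := by positivity
    rw [← hs, Real.sqrt_sq hs0.le]
    field_simp
  rw [e1]
  set M := binomMass (r + 1) k p
  set N := Real.sqrt (2 * Real.pi / ((r + 2) * (p * (1 - p)))) *
        Real.exp (-((r + 2) * p - x) ^ 2 / (2 * ((r + 2) * (p * (1 - p)))))
  have e3 : (r + 2) * M - (r + 2) / (2 * Real.pi) * N =
      (r + 2) / (2 * Real.pi) * (2 * Real.pi * M - N) := by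
    have := Real.pi_pos
    field_simp
  rw [e3, abs_mul, abs_of_pos (by positivity : 0 < ((r : ℝ) + 2) / (2 * Real.pi)), div_mul_eq_mul_div,
    div_le_iff₀ (by positivity)]
  have h3 := mul_le_mul_of_nonneg_left h1 (by positivity : 0 ≤ (r : ℝ) + 2)
  have := Real.pi_gt_d2
  linarith

lemma abs_density_mul_le {p z : ℝ} (hp : p ∈ Icc (0.1689 : ℝ) 0.5) :
    |normalDensity z * (z * ((1 - 2 * p) / (2 * (p * (1 - p)))))| ≤ 0.95 := by
  obtain ⟨h1, h2⟩ := hp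
  have hu : 0.14 ≤ p * (1 - p) := by nlinarith
  have h3 : 0 ≤ (1 - 2 * p) / (2 * (p * (1 - p))) := div_nonneg (by linarith) (by linarith)
  have h4 : (1 - 2 * p) / (2 * (p * (1 - p))) ≤ 2.37 := by
    rw [div_le_iff₀ (by linarith)]; linarith
  rw [abs_mul, abs_mul, abs_of_nonneg h3, abs_of_nonneg (normalDensity_nonneg z)]
  calc _ = (|z| * normalDensity z) * ((1 - 2 * p) / (2 * (p * (1 - p)))) := by ring
    _ ≤ (0.4 : ℝ) * 2.37 := by gcongr; exact abs_mul_normalDensity_le z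
    _ ≤ 0.95 := by norm_num

lemma div_sqrt_le {n : ℕ} (hn : 1 ≤ n) {p : ℝ} (hu : 0.14 ≤ p * (1 - p)) :
    n / Real.sqrt (n * p * (1 - p)) ≤ 2.7 * n := by
  have hn' : (1 : ℝ) ≤ n := by exact_mod_cast hn
  have h : 0.374 ≤ Real.sqrt (n * p * (1 - p)) := by
    refine Real.le_sqrt_of_sq_le ?_
    nlinarith
  rw [div_le_iff₀ (by linarith)]
  nlinarith

lemma density_mul_le_of_nonpos {n : ℕ} (hn : 1 ≤ n) {p x : ℝ} (hp : 0.1689 ≤ p) (hp1 : p < 1)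
    (hx : x ≤ 0) :
    normalDensity ((x - n * p) / Real.sqrt (n * p * (1 - p))) *
      (n / Real.sqrt (n * p * (1 - p))) ≤ 2.4 := by
  have hn' : (1 : ℝ) ≤ n := by exact_mod_cast hn
  have hq : 0 < 1 - p := by linarith
  have hs : 0 < Real.sqrt (n * p * (1 - p)) := Real.sqrt_pos.2 (by positivity)
  have h := abs_mul_normalDensity_le ((x - n * p) / Real.sqrt (n * p * (1 - p)))
  have h0 := normalDensity_nonneg ((x - n * p) / Real.sqrt (n * p * (1 - p)))
  have h1 : n / Real.sqrt (n * p * (1 - p)) * 0.1689 ≤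
      |(x - n * p) / Real.sqrt (n * p * (1 - p))| := by
    rw [abs_div, abs_of_pos hs, div_mul_eq_mul_div]
    gcongr
    rw [abs_of_nonpos (by nlinarith)]
    nlinarith
  have h2 := mul_le_mul_of_nonneg_left h1 h0
  linarith

/-- The error `F_{n,p}(x) − Φ((x − np)/√(npq))` of the normal approximation. -/
noncomputable def normalError (n : ℕ) (x p : ℝ) : ℝ :=
  binomCDF n p x - Phi ((x - n * p) / Real.sqrt (n * p * (1 - p)))

lemma exists_hasDerivAt_normalError {n : ℕ} (hn : 1 ≤ n) {p : ℝ} (hp : p ∈ Icc (0.1689 : ℝ) 0.5)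
    (x : ℝ) : ∃ D, HasDerivAt (normalError n x) D p ∧ |D| ≤ errorLipschitz n := by
  have hp0 : 0 < p := by linarith [hp.1]
  have hp1 : p < 1 := by linarith [hp.2]
  have hu : 0.14 ≤ p * (1 - p) := by nlinarith [hp.1, hp.2]
  have hn' : (1 : ℝ) ≤ n := by exact_mod_cast hn
  have hPhi := hasDerivAt_Phi_standardized hn hp0 hp1 x
  set s := Real.sqrt (n * p * (1 - p)) with hs
  set z := (x - n * p) / s with hz
  have hc := abs_density_mul_le (z := z) hp
  set C := normalDensity z * (z * ((1 - 2 * p) / (2 * (p * (1 - p))))) with hC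
  have hs0 : 0 ≤ n / s := div_nonneg (by linarith) (Real.sqrt_nonneg _)
  have hd0 := normalDensity_nonneg z
  have hcrude : normalDensity z * (n / s) ≤ 1.08 * n := by
    calc _ ≤ (0.4 : ℝ) * (2.7 * n) := by
          gcongr
          exacts [normalDensity_le z, div_sqrt_le hn hu]
      _ = 1.08 * n := by ring
  have hd1 : 0 ≤ normalDensity z * (n / s) := mul_nonneg hd0 hs0
  obtain ⟨hc1, hc2⟩ := abs_le.1 hc
  rcases le_or_gt x 0 with hx | hx
  · refine ⟨_, HasDerivAt.sub (f := fun p => binomCDF n p x) (f' := 0) ?_ hPhi, ?_⟩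
    · simp_rw [binomCDF_of_nonpos n _ hx]; exact hasDerivAt_const _ _
    · have h24 := density_mul_le_of_nonpos hn hp.1 hp1 hx
      rw [← hs, ← hz] at h24
      have e : 0 - -(normalDensity z * (n / s + z * ((1 - 2 * p) / (2 * (p * (1 - p)))))) =
        normalDensity z * (n / s) + C := by rw [hC]; ring
      rw [e, errorLipschitz]
      split_ifs <;> rw [abs_le] <;> constructor <;> linarith
  · obtain ⟨m, rfl⟩ : ∃ m, n = m + 1 := ⟨n - 1, by omega⟩
    obtain ⟨k, hk0, hk1⟩ : ∃ k : ℕ, (k : ℝ) < x ∧ x ≤ k + 1 := by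
      have h1 := Nat.ceil_pos.2 hx
      refine ⟨⌈x⌉₊ - 1, Nat.lt_ceil.1 (by omega), (Nat.le_ceil x).trans ?_⟩
      exact_mod_cast (by omega : ⌈x⌉₊ ≤ ⌈x⌉₊ - 1 + 1)
    refine ⟨_, (hasDerivAt_binomCDF m k p hk0 hk1).sub hPhi, ?_⟩
    have hb0 := binomMass_nonneg m k hp0.le hp1.le
    have hb1 := binomMass_le_one m k hp0.le hp1.le
    have e : -((m + 1) * binomMass m k p) -
        -(normalDensity z * ((m + 1 : ℕ) / s + z * ((1 - 2 * p) / (2 * (p * (1 - p)))))) =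
        -(((m + 1 : ℕ) : ℝ) * binomMass m k p - normalDensity z * ((m + 1 : ℕ) / s)) + C := by
      rw [hC]; push_cast; ring
    rw [e, errorLipschitz]
    split_ifs with hm
    · have hb2 : ((m + 1 : ℕ) : ℝ) * binomMass m k p ≤ (m + 1 : ℕ) :=
        mul_le_of_le_one_right (by linarith) hb1
      have hb3 : 0 ≤ ((m + 1 : ℕ) : ℝ) * binomMass m k p := mul_nonneg (by linarith) hb0
      rw [abs_le]; constructor <;> linarith
    · have hl := mul_binomMass_sub_density_le hp0 hp1 hu (by omega : 200 < m + 1) k hk0.le hk1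
      rw [← hs, ← hz, Nat.add_sub_cancel] at hl
      obtain ⟨hl1, hl2⟩ := abs_le.1 hl
      rw [abs_le]; constructor <;> linarith

lemma abs_normalError_sub_le {n : ℕ} (hn : 1 ≤ n) {p p' : ℝ} (hp : p ∈ Icc (0.1689 : ℝ) 0.5)
    (hp' : p' ∈ Icc (0.1689 : ℝ) 0.5) (x : ℝ) :
    |normalError n x p - normalError n x p'| ≤ errorLipschitz n * |p - p'| := by
  choose! D hD hDle using fun p (hp : p ∈ Icc (0.1689 : ℝ) 0.5) =>
    exists_hasDerivAt_normalError hn hp x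
  exact Convex.norm_image_sub_le_of_norm_hasDerivWithin_le
    (fun y hy => (hD y hy).hasDerivWithinAt) (fun y hy => hDle y hy) (convex_Icc _ _) hp' hp

lemma abs_normalError_le_one (n : ℕ) {p : ℝ} (hp0 : 0 ≤ p) (hp1 : p ≤ 1) (x : ℝ) :
    |normalError n x p| ≤ 1 := by
  have h1 := binomCDF_nonneg n hp0 hp1 x
  have h2 := binomCDF_le_one n hp0 hp1 x
  have h3 := Phi_nonneg ((x - n * p) / Real.sqrt (n * p * (1 - p)))
  have h4 := Phi_le_one ((x - n * p) / Real.sqrt (n * p * (1 - p)))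
  rw [normalError, abs_le]; constructor <;> linarith

lemma Delta_nonneg (n : ℕ) (p : ℝ) : 0 ≤ Delta n p := Real.iSup_nonneg fun _ => abs_nonneg _

lemma Delta_le_one (n : ℕ) {p : ℝ} (hp0 : 0 ≤ p) (hp1 : p ≤ 1) : Delta n p ≤ 1 :=
  ciSup_le fun x => abs_normalError_le_one n hp0 hp1 x

lemma Delta_le_add {n : ℕ} (hn : 1 ≤ n) {p p' : ℝ} (hp : p ∈ Icc (0.1689 : ℝ) 0.5)
    (hp' : p' ∈ Icc (0.1689 : ℝ) 0.5) :
    Delta n p ≤ Delta n p' + errorLipschitz n * |p - p'| := by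
  refine ciSup_le fun x => ?_
  have hbdd : BddAbove (range fun x => |normalError n x p'|) :=
    ⟨1, by
      rintro _ ⟨x, rfl⟩
      exact abs_normalError_le_one n (by linarith [hp'.1]) (by linarith [hp'.2]) x⟩
  have h1 : |normalError n x p'| ≤ Delta n p' := le_ciSup hbdd x
  have h2 := abs_normalError_sub_le hn hp hp' x
  have h3 := abs_sub_abs_le_abs_sub (normalError n x p) (normalError n x p')
  change |normalError n x p| ≤ _
  linarith

lemma abs_Delta_sub_le {n : ℕ} (hn : 1 ≤ n) {p p' : ℝ} (hp : p ∈ Icc (0.1689 : ℝ) 0.5)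
    (hp' : p' ∈ Icc (0.1689 : ℝ) 0.5) :
    |Delta n p - Delta n p'| ≤ errorLipschitz n * |p - p'| := by
  have h1 := Delta_le_add hn hp hp'
  have h2 := Delta_le_add hn hp' hp
  rw [abs_sub_comm p' p] at h2
  rw [abs_le]; constructor <;> linarith

lemma one_le_rho {p : ℝ} (hp0 : 0 < p) (hp1 : p < 1) : 1 ≤ rho p := by
  have hq : 0 < 1 - p := by linarith
  have h : 0 < Real.sqrt (p * (1 - p)) := Real.sqrt_pos.2 (by positivity)
  rw [rho, one_le_div h]
  refine Real.sqrt_le_iff.2 ⟨by positivity, ?_⟩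
  nlinarith [sq_nonneg (p * (1 - p)), sq_nonneg (1 - 2 * p), mul_pos hp0 hq,
    sq_nonneg ((1 - 2 * p) ^ 2)]

lemma abs_inv_rho_sub_le {p p' : ℝ} (hp : p ∈ Icc (0.1689 : ℝ) 0.5)
    (hp' : p' ∈ Icc (0.1689 : ℝ) 0.5) : |(rho p)⁻¹ - (rho p')⁻¹| ≤ 3.2 * |p - p'| := by
  obtain ⟨h1, h2⟩ := hp
  obtain ⟨h1', h2'⟩ := hp'
  have hu : 0.14 ≤ p * (1 - p) := by nlinarith
  have hu' : 0.14 ≤ p' * (1 - p') := by nlinarith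
  have hs : 0.374 ≤ Real.sqrt (p * (1 - p)) := Real.le_sqrt_of_sq_le (by linarith)
  have hs' : 0.374 ≤ Real.sqrt (p' * (1 - p')) := Real.le_sqrt_of_sq_le (by linarith)
  have hsq : Real.sqrt (p * (1 - p)) ^ 2 = p * (1 - p) := Real.sq_sqrt (by linarith)
  have hsq' : Real.sqrt (p' * (1 - p')) ^ 2 = p' * (1 - p') := Real.sq_sqrt (by linarith)
  have hle' : Real.sqrt (p' * (1 - p')) ≤ 0.5 :=
    Real.sqrt_le_iff.2 ⟨by norm_num, by nlinarith [sq_nonneg (1 - 2 * p')]⟩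
  rw [rho, rho, inv_div, inv_div]
  set s := Real.sqrt (p * (1 - p))
  set s' := Real.sqrt (p' * (1 - p'))
  have hA : 1 / 2 ≤ p ^ 2 + (1 - p) ^ 2 := by nlinarith [sq_nonneg (1 - 2 * p)]
  have hA' : 1 / 2 ≤ p' ^ 2 + (1 - p') ^ 2 := by nlinarith [sq_nonneg (1 - 2 * p')]
  have hAA : 1 / 4 + (1 - p - p') ^ 2 / 2 ≤
      (p ^ 2 + (1 - p) ^ 2) * (p' ^ 2 + (1 - p') ^ 2) := by
    nlinarith [sq_nonneg ((1 - 2 * p) * (1 - 2 * p')), sq_nonneg (p - p')]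
  have hdiff : (s - s') * (s + s') = (p - p') * (1 - p - p') := by
    linear_combination hsq - hsq'
  have hds : |s - s'| ≤ 0.8855 * |p - p'| := by
    have h3 : |s - s'| * (s + s') = |p - p'| * (1 - p - p') := by
      rw [← abs_of_pos (by linarith : 0 < s + s'), ← abs_mul, hdiff, abs_mul,
        abs_of_nonneg (by linarith : 0 ≤ 1 - p - p')]
    have h4 : |s - s'| * 0.748 ≤ |s - s'| * (s + s') := by gcongr; linarith
    have h5 : |p - p'| * (1 - p - p') ≤ |p - p'| * 0.6622 := by gcongr; linarith
    linarith [abs_nonneg (p - p')]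
  have e : s / (p ^ 2 + (1 - p) ^ 2) - s' / (p' ^ 2 + (1 - p') ^ 2) =
      (s - s') / (p ^ 2 + (1 - p) ^ 2) + s' * (2 * ((p - p') * (1 - p - p'))) /
        ((p ^ 2 + (1 - p) ^ 2) * (p' ^ 2 + (1 - p') ^ 2)) := by
    field_simp
    ring
  rw [e]
  have t1 : |(s - s') / (p ^ 2 + (1 - p) ^ 2)| ≤ 1.771 * |p - p'| := by
    rw [abs_div, abs_of_pos (by linarith : 0 < p ^ 2 + (1 - p) ^ 2), div_le_iff₀ (by linarith)]
    have := mul_le_mul_of_nonneg_left hA (abs_nonneg (p - p'))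
    linarith
  have t2 : |s' * (2 * ((p - p') * (1 - p - p'))) /
        ((p ^ 2 + (1 - p) ^ 2) * (p' ^ 2 + (1 - p') ^ 2))| ≤ 1.42 * |p - p'| := by
    have hD : 0 ≤ 1 - p - p' := by linarith
    have hpos : 0 < (p ^ 2 + (1 - p) ^ 2) * (p' ^ 2 + (1 - p') ^ 2) :=
      mul_pos (by linarith) (by linarith)
    rw [abs_div, abs_of_pos hpos, div_le_iff₀ hpos, abs_mul, abs_mul, abs_mul, abs_of_nonneg hD,
      abs_of_nonneg (by linarith : 0 ≤ s'), abs_two]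
    have h5 : 1 - p - p' ≤ 1.42 * ((p ^ 2 + (1 - p) ^ 2) * (p' ^ 2 + (1 - p') ^ 2)) := by
      nlinarith [sq_nonneg (1 - p - p' - 0.7)]
    calc s' * (2 * (|p - p'| * (1 - p - p'))) ≤ 0.5 * (2 * (|p - p'| * (1 - p - p'))) := by gcongr
      _ = |p - p'| * (1 - p - p') := by ring
      _ ≤ |p - p'| * (1.42 * ((p ^ 2 + (1 - p) ^ 2) * (p' ^ 2 + (1 - p') ^ 2))) := by gcongr
      _ = _ := by ring
  refine (abs_add_le _ _).trans ((add_le_add t1 t2).trans ?_)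
  linarith [abs_nonneg (p - p')]

lemma sqrt_mul_errorLipschitz_add_le {n : ℕ} (hn : n ≤ 500000) :
    Real.sqrt n * (errorLipschitz n + 3.2) ≤ 9200 := by
  rw [errorLipschitz]
  split_ifs with h
  · have h' : (n : ℝ) ≤ 200 := by exact_mod_cast h
    have hs : Real.sqrt n ≤ 15 := Real.sqrt_le_iff.2 ⟨by norm_num, by linarith⟩
    calc _ ≤ (15 : ℝ) * (2.1 * 200 + 1 + 3.2) := by gcongr
      _ ≤ 9200 := by norm_num
  · have h' : (n : ℝ) ≤ 500000 := by exact_mod_cast hn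
    have hs : Real.sqrt n ≤ 708 := Real.sqrt_le_iff.2 ⟨by norm_num, by linarith⟩
    calc _ ≤ (708 : ℝ) * (8.7 + 3.2) := by gcongr
      _ ≤ 9200 := by norm_num

/-- If `p, p′ ∈ [0.1689, 0.5]` with `|p − p′| ≤ 5·10⁻¹³` (`p′` the closest node
of the uniform grid with step `10⁻¹²` on `[0.1689, 0.5]`), then for all
`1 ≤ n ≤ 500000`, `|T_n(p) − T_n(p′)| ≤ 4.6·10⁻⁹`. -/
theorem grid_interpolation_T (p p' : ℝ)
    (hp : p ∈ Set.Icc (0.1689 : ℝ) 0.5) (hp' : p' ∈ Set.Icc (0.1689 : ℝ) 0.5)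
    (hclose : |p - p'| ≤ 5e-13)
    (n : ℕ) (hn1 : 1 ≤ n) (hn2 : n ≤ 500000) :
    |T n p - T n p'| ≤ 4.6e-9 := by
  have hrho := one_le_rho (p := p) (by linarith [hp.1]) (by linarith [hp.2])
  have hinv0 : 0 ≤ (rho p)⁻¹ := inv_nonneg.2 (by linarith)
  have hinv1 : (rho p)⁻¹ ≤ 1 := inv_le_one_of_one_le₀ hrho
  have hD := abs_Delta_sub_le hn1 hp hp'
  have hR := abs_inv_rho_sub_le hp hp'
  have hD0 := Delta_nonneg n p'
  have hD1 := Delta_le_one n (p := p') (by linarith [hp'.1]) (by linarith [hp'.2])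
  have e : T n p - T n p' = Real.sqrt n * ((Delta n p - Delta n p') * (rho p)⁻¹ +
      Delta n p' * ((rho p)⁻¹ - (rho p')⁻¹)) := by
    rw [T, T]; ring
  have h1 : |(Delta n p - Delta n p') * (rho p)⁻¹ + Delta n p' * ((rho p)⁻¹ - (rho p')⁻¹)| ≤
      (errorLipschitz n + 3.2) * |p - p'| := by
    refine (abs_add_le _ _).trans ?_
    rw [abs_mul, abs_mul, abs_of_nonneg hinv0, abs_of_nonneg hD0, add_mul]
    exact add_le_add ((mul_le_of_le_one_right (abs_nonneg _) hinv1).trans hD)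
      ((mul_le_of_le_one_left (abs_nonneg _) hD1).trans hR)
  rw [e, abs_mul, abs_of_nonneg (Real.sqrt_nonneg _)]
  calc _ ≤ Real.sqrt n * ((errorLipschitz n + 3.2) * |p - p'|) := by gcongr
    _ = Real.sqrt n * (errorLipschitz n + 3.2) * |p - p'| := by ring
    _ ≤ 9200 * 5e-13 := by gcongr; exact sqrt_mul_errorLipschitz_add_le hn2
    _ = 4.6e-9 := by norm_num
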